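/- arXiv:1404.5240 — 2 statements merged into one kernel-verified Lean document; each statement's English description precedes it below -/
import Mathlib

section
/- With the Fock-module operators e_j, f_j defined below and with u = 0, the operator [e_0, f_0] = e_0∘f_0 − f_0∘e_0 on F equals −1/(h1·h2) times the identity operator of F. -/
noncomputable section

/-- A partition: a weakly decreasing function `ℕ → ℕ` (0-indexed rows) that takes the
value `0` somewhere (hence eventually). -/
def IsPtn (f : ℕ → ℕ) : Prop := Antitone f ∧ ∃ N, f N = 0

/-- The type of partitions. -/
abbrev Ptn : Type := {f : ℕ → ℕ // IsPtn f}

/-- The Fock space: the free `ℂ`-vector space with basis indexed by all partitions. -/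
abbrev FockSp : Type := Ptn →₀ ℂ

namespace Fock

/-- The number of nonzero parts of a partition (the first 0-indexed row equal to zero). -/
def plen (lam : Ptn) : ℕ := Nat.find lam.2.2

/-- `|λ| = Σ_i λ_i`. -/
def psize (lam : Ptn) : ℕ := ∑ i ∈ Finset.range (plen lam), lam.1 i

/-- A box may be added in (0-indexed) row `i`, i.e. `λ + 1_i` is again a partition. -/
def Addable (lam : Ptn) (i : ℕ) : Prop := ∀ p, p < i → lam.1 i < lam.1 p

instance (lam : Ptn) (i : ℕ) : Decidable (Addable lam i) :=
  inferInstanceAs (Decidable (∀ p, p < i → lam.1 i < lam.1 p))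

/-- A box may be removed from (0-indexed) row `i`, i.e. `λ − 1_i` is again a partition. -/
def Removable (lam : Ptn) (i : ℕ) : Prop := lam.1 (i + 1) < lam.1 i

instance (lam : Ptn) (i : ℕ) : Decidable (Removable lam i) :=
  inferInstanceAs (Decidable (lam.1 (i + 1) < lam.1 i))

/-- The partition `λ + 1_i`. -/
def addBox (lam : Ptn) (i : ℕ) (h : Addable lam i) : Ptn :=
  ⟨Function.update lam.1 i (lam.1 i + 1), by
    constructor
    · intro a b hab
      rw [Function.update_apply, Function.update_apply]
      split_ifs with hb ha ha
      · exact le_rfl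
      · have : a < i := lt_of_le_of_ne (hb ▸ hab) ha
        exact h a this
      · have : lam.1 b ≤ lam.1 i := lam.2.1 (ha ▸ hab)
        omega
      · exact lam.2.1 hab
    · obtain ⟨N, hN⟩ := lam.2.2
      refine ⟨max N (i + 1), ?_⟩
      rw [Function.update_apply, if_neg (by omega : ¬ max N (i + 1) = i)]
      have := lam.2.1 (le_max_left N (i + 1))
      omega⟩

/-- The partition `λ − 1_i`. -/
def remBox (lam : Ptn) (i : ℕ) (h : Removable lam i) : Ptn :=
  ⟨Function.update lam.1 i (lam.1 i - 1), by
    constructor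
    · intro a b hab
      rw [Function.update_apply, Function.update_apply]
      split_ifs with hb ha ha
      · exact le_rfl
      · have : lam.1 i ≤ lam.1 a := lam.2.1 (le_of_lt (lt_of_le_of_ne (hb ▸ hab) ha))
        omega
      · have h1 : lam.1 b ≤ lam.1 (i + 1) := lam.2.1 (by omega : i + 1 ≤ b)
        have h2 : lam.1 (i + 1) < lam.1 i := h
        omega
      · exact lam.2.1 hab
    · obtain ⟨N, hN⟩ := lam.2.2
      refine ⟨max N (i + 1), ?_⟩
      rw [Function.update_apply, if_neg (by omega : ¬ max N (i + 1) = i)]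
      have := lam.2.1 (le_max_left N (i + 1))
      omega⟩

variable (h1 h2 u : ℂ)

/-- The coefficient of `|λ + 1_i⟩` in `e_j |λ⟩` (0-indexed row `i`). -/
def ecoef (j : ℕ) (lam : Ptn) (i : ℕ) : ℂ :=
  (1 / h1) *
  (∏ p ∈ Finset.range i,
    (((((lam.1 i : ℂ) - (lam.1 p : ℂ)) * h1 + (((i : ℂ) - (p : ℂ)) - 1) * h2)
        * (((lam.1 i : ℂ) - (lam.1 p : ℂ) + 1) * h1 + (((i : ℂ) - (p : ℂ)) + 1) * h2))
      / ((((lam.1 i : ℂ) - (lam.1 p : ℂ)) * h1 + ((i : ℂ) - (p : ℂ)) * h2)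
        * (((lam.1 i : ℂ) - (lam.1 p : ℂ) + 1) * h1 + ((i : ℂ) - (p : ℂ)) * h2)))) *
  ((lam.1 i : ℂ) * h1 + (i : ℂ) * h2 + u) ^ j

/-- The coefficient of `|λ − 1_i⟩` in `f_j |λ⟩` (0-indexed row `i`). -/
def fcoef (j : ℕ) (lam : Ptn) (i : ℕ) : ℂ :=
  (-(1 / h1)) *
  ((((lam.1 (i+1) : ℂ) - (lam.1 i : ℂ)) * h1)
      / ((((lam.1 (i+1) : ℂ) - (lam.1 i : ℂ)) + 1) * h1 + h2)) *
  (∏ p ∈ Finset.Icc (i + 1) (plen lam),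
    (((((lam.1 p : ℂ) - (lam.1 i : ℂ) + 1) * h1 + (((p : ℂ) - (i : ℂ)) + 1) * h2)
        * (((lam.1 (p+1) : ℂ) - (lam.1 i : ℂ)) * h1 + ((p : ℂ) - (i : ℂ)) * h2))
      / ((((lam.1 (p+1) : ℂ) - (lam.1 i : ℂ) + 1) * h1 + (((p : ℂ) - (i : ℂ)) + 1) * h2)
        * (((lam.1 p : ℂ) - (lam.1 i : ℂ)) * h1 + ((p : ℂ) - (i : ℂ)) * h2)))) *
  (((lam.1 i : ℂ) - 1) * h1 + (i : ℂ) * h2 + u) ^ j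

/-- `e_j |λ⟩`, a finite sum over the rows where a box can be added (all of which lie in
`{0, …, plen λ}`). -/
def evec (j : ℕ) (lam : Ptn) : FockSp :=
  ∑ i ∈ Finset.range (plen lam + 1),
    if h : Addable lam i then Finsupp.single (addBox lam i h) (ecoef h1 h2 u j lam i) else 0

/-- `f_j |λ⟩`, a finite sum over the rows where a box can be removed (all of which lie in
`{0, …, plen λ − 1}`). -/
def fvec (j : ℕ) (lam : Ptn) : FockSp :=
  ∑ i ∈ Finset.range (plen lam),
    if h : Removable lam i then Finsupp.single (remBox lam i h) (fcoef h1 h2 u j lam i) else 0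

/-- The Fock-module operator `e_j`. -/
def eOp (j : ℕ) : Module.End ℂ FockSp :=
  Finsupp.lsum ℂ fun lam => LinearMap.toSpanSingleton ℂ FockSp (evec h1 h2 u j lam)

/-- The Fock-module operator `f_j`. -/
def fOp (j : ℕ) : Module.End ℂ FockSp :=
  Finsupp.lsum ℂ fun lam => LinearMap.toSpanSingleton ℂ FockSp (fvec h1 h2 u j lam)

/-- `ψ_k := [e_k, f_0]`. -/
def psiOp (k : ℕ) : Module.End ℂ FockSp :=
  eOp h1 h2 u k * fOp h1 h2 u 0 - fOp h1 h2 u 0 * eOp h1 h2 u k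

end Fock


open Fock

/-!
The coefficients of `e_0` and `f_0` make sense for arbitrary row positions `x : ℕ → K`, where adding
a box to row `i` adds `h1` to `x i`, and they vanish whenever the new sequence of rows is not a
partition. On sequences the off-diagonal terms of `e_0 f_0 - f_0 e_0` cancel identically. The
diagonal terms are, up to a common factor, the residues at `x i` and `x i - h1` of
`ψ(z) = ∏ p < M, (z - x p + h1 + h2)(z - x p - h2) / ((z - x p + h1)(z - x p)) *
(z - x M + h1 + h2) / (z - x M)`, whose residue at `x M` is zero because row `M - 1` is empty.
Hence their sum is the coefficient of `1 / z` of `ψ` at infinity, which is `h1 + h2`.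
-/

namespace Fock

section Residues

open Polynomial

/-- The residues of `∏ (z - w i) / ∏ (z - v i)` add up to its coefficient of `1 / z` at infinity. -/
theorem sum_prod_sub_div_prod_erase_sub {ι F : Type*} [DecidableEq ι] [Field F] {s : Finset ι}
    {v : ι → F} (w : ι → F) (hv : Set.InjOn v s) :
    ∑ i ∈ s, (∏ j ∈ s, (v i - w j)) / ∏ j ∈ s.erase i, (v i - v j) = ∑ i ∈ s, (v i - w i) := by
  rcases s.eq_empty_or_nonempty with rfl | hs
  · simp
  have hcard : 0 < s.card := hs.card_pos
  have hdeg : (Lagrange.nodal s w - Lagrange.nodal s v).degree < s.card := by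
    rw [← Lagrange.degree_nodal (s := s) (v := w)]
    exact degree_sub_lt_left (Lagrange.degree_nodal.trans Lagrange.degree_nodal.symm)
      Lagrange.nodal_ne_zero
      (Lagrange.nodal_monic.leadingCoeff.trans Lagrange.nodal_monic.leadingCoeff.symm)
  have heval : ∀ i ∈ s, (Lagrange.nodal s w - Lagrange.nodal s v).eval (v i) =
      ∏ j ∈ s, (v i - w j) := fun i hi => by
    rw [eval_sub, Lagrange.eval_nodal_at_node hi, sub_zero, Lagrange.eval_nodal]
  calc ∑ i ∈ s, (∏ j ∈ s, (v i - w j)) / ∏ j ∈ s.erase i, (v i - v j)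
      = (Lagrange.nodal s w - Lagrange.nodal s v).coeff (s.card - 1) := by
        rw [Lagrange.coeff_eq_sum hv hdeg]
        exact Finset.sum_congr rfl fun i hi => by rw [heval i hi]
    _ = ∑ i ∈ s, (v i - w i) := by
        rw [coeff_sub, Lagrange.nodal, Lagrange.nodal, prod_X_sub_C_coeff_card_pred _ _ hcard,
          prod_X_sub_C_coeff_card_pred _ _ hcard, Finset.sum_sub_distrib]
        ring

end Residues

theorem prod_range_mul_prod_Ioo {R : Type*} [CommMonoid R] (g : ℕ → R) {i M : ℕ} (hi : i < M) :
    (∏ p ∈ Finset.range i, g p) * ∏ p ∈ Finset.Ioo i M, g p =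
      ∏ p ∈ (Finset.range M).erase i, g p := by
  have hdisj : Disjoint (Finset.range i) (Finset.Ioo i M) :=
    Finset.disjoint_left.2 fun p hp hp' => by
      have := Finset.mem_range.1 hp
      have := Finset.mem_Ioo.1 hp'
      omega
  rw [← Finset.prod_union hdisj]
  refine Finset.prod_congr (Finset.ext fun p => ?_) fun _ _ => rfl
  simp only [Finset.mem_union, Finset.mem_range, Finset.mem_Ioo, Finset.mem_erase]
  omega

section Positions

variable {K : Type*} [Field K] (h1 h2 : K)

/-- The contribution of one row to the coefficients of `e_0` and `f_0`, where `w` is the position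
of the box added or removed minus the position of the first free box of the row. -/
def rowFactor (w : K) : K := ((w + h1 + h2) * (w - h2)) / ((w + h1) * w)

/-- The joint contribution of an empty row and all the rows below it. It is the telescoped
product of the corresponding values of `rowFactor`. -/
def tailFactor (w : K) : K := (w + h1 + h2) / w

theorem tailFactor_neg_sub : tailFactor h1 h2 (-h2 - h1) = 0 := by
  have hnum : -h2 - h1 + h1 + h2 = 0 := by ring
  rw [tailFactor, hnum, zero_div]

/-- The factor of two consecutive rows in the coefficients of `f_0`, where `w` and `w'` are the
arguments that `rowFactor` has for these two rows. -/
def stepFactor (w w' : K) : K := ((w - h2) * (w' + h1 + h2)) / ((w + h1) * w')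

theorem rowFactor_neg_sub (w : K) : rowFactor h1 h2 (-w - h1) = rowFactor h1 h2 w := by
  unfold rowFactor
  congr 1 <;> ring

theorem rowFactor_self : rowFactor h1 h2 h2 = 0 := by
  simp [rowFactor]

theorem tailFactor_mul_stepFactor (w w' : K) :
    tailFactor h1 h2 w * stepFactor h1 h2 w w' = rowFactor h1 h2 w * tailFactor h1 h2 w' := by
  simp only [rowFactor, tailFactor, stepFactor, div_mul_div_comm]
  congr 1 <;> ring

theorem tailFactor_mul_prod_stepFactor (y : ℕ → K) {m n : ℕ} (hmn : m ≤ n) :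
    tailFactor h1 h2 (y m) * ∏ p ∈ Finset.Ico m n, stepFactor h1 h2 (y p) (y (p + 1)) =
      (∏ p ∈ Finset.Ico m n, rowFactor h1 h2 (y p)) * tailFactor h1 h2 (y n) := by
  induction n, hmn using Nat.le_induction with
  | base => simp
  | succ n hn ih =>
    rw [Finset.prod_Ico_succ_top hn, Finset.prod_Ico_succ_top hn, ← mul_assoc, ih, mul_assoc,
      tailFactor_mul_stepFactor, mul_assoc]

theorem stepFactor_sub_eq_one {w : K} (hw : w + h1 ≠ 0) (hw' : w - h2 ≠ 0) :
    stepFactor h1 h2 w (w - h2) = 1 := by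
  rw [stepFactor, div_eq_one_iff_eq (mul_ne_zero hw hw')]
  ring

/-- The function `ψ(z) = ∏ p < M, rowFactor (z - x p) * tailFactor (z - x M)` without the factor of
row `i`, whose values at `x i` and `x i - h1` are the diagonal terms of the commutator up to a
constant. Here `x p` is the position of the first free box of row `p`, and the rows from `M` on are
empty. -/
def psiErase (M : ℕ) (x : ℕ → K) (i : ℕ) (z : K) : K :=
  (∏ p ∈ (Finset.range M).erase i, rowFactor h1 h2 (z - x p)) * tailFactor h1 h2 (z - x M)

theorem psiErase_eq_div (M : ℕ) (x : ℕ → K) (i : ℕ) (z : K) :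
    psiErase h1 h2 M x i z =
      ((∏ p ∈ (Finset.range M).erase i, (z - x p + h1 + h2)) *
          (∏ p ∈ (Finset.range M).erase i, (z - x p - h2)) * (z - x M + h1 + h2)) /
        ((∏ p ∈ (Finset.range M).erase i, (z - x p + h1)) *
          (∏ p ∈ (Finset.range M).erase i, (z - x p)) * (z - x M)) := by
  simp only [psiErase, rowFactor, tailFactor, Finset.prod_div_distrib, Finset.prod_mul_distrib,
    div_mul_div_comm]

theorem psi_numerator_eq {M : ℕ} (x : ℕ → K) {i : ℕ} (hi : i < M) (z : K) :
    (∏ p ∈ Finset.range (M + 1), (z - (x p - h1 - h2))) * ∏ p ∈ Finset.range M, (z - (x p + h2)) =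
      (z - x i + h1 + h2) * (z - x i - h2) *
        ((∏ p ∈ (Finset.range M).erase i, (z - x p + h1 + h2)) *
          (∏ p ∈ (Finset.range M).erase i, (z - x p - h2)) * (z - x M + h1 + h2)) := by
  have hi' : i ∈ Finset.range M := Finset.mem_range.2 hi
  rw [Finset.prod_range_succ, ← Finset.mul_prod_erase _ _ hi', ← Finset.mul_prod_erase _ _ hi']
  simp only [← sub_add, sub_add_eq_sub_sub]
  ring

theorem psi_residue_eq {M : ℕ} (x : ℕ → K) {i : ℕ} (hi : i < M) :
    ((∏ p ∈ Finset.range (M + 1), (x i - (x p - h1 - h2))) *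
        ∏ p ∈ Finset.range M, (x i - (x p + h2))) /
      ((∏ p ∈ (Finset.range (M + 1)).erase i, (x i - x p)) *
        ∏ p ∈ Finset.range M, (x i - (x p - h1))) =
    -(h2 * (h1 + h2) / h1) * psiErase h1 h2 M x i (x i) := by
  have hi' : i ∈ Finset.range M := Finset.mem_range.2 hi
  rw [psi_numerator_eq h1 h2 x hi, psiErase_eq_div, Finset.range_add_one,
    Finset.erase_insert_of_ne hi.ne', Finset.prod_insert (by simp), ← Finset.mul_prod_erase _ _ hi',
    ← neg_div, div_mul_div_comm]
  simp only [← sub_add, sub_self, zero_add]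
  congr 1 <;> ring

theorem psi_residue_sub_eq {M : ℕ} (x : ℕ → K) {i : ℕ} (hi : i < M) :
    ((∏ p ∈ Finset.range (M + 1), (x i - h1 - (x p - h1 - h2))) *
        ∏ p ∈ Finset.range M, (x i - h1 - (x p + h2))) /
      ((∏ p ∈ Finset.range (M + 1), (x i - h1 - x p)) *
        ∏ p ∈ (Finset.range M).erase i, (x i - h1 - (x p - h1))) =
    h2 * (h1 + h2) / h1 * psiErase h1 h2 M x i (x i - h1) := by
  have hi' : i ∈ Finset.range M := Finset.mem_range.2 hi
  rw [psi_numerator_eq h1 h2 x hi, psiErase_eq_div, Finset.prod_range_succ,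
    ← Finset.mul_prod_erase _ _ hi', ← neg_div_neg_eq, div_mul_div_comm]
  simp only [← sub_add (x i - h1), sub_right_comm (x i) h1 (x i), sub_self, zero_sub]
  congr 1 <;> ring

theorem psi_last_residue_eq (M : ℕ) (x : ℕ → K) :
    ((∏ p ∈ Finset.range (M + 1), (x M - (x p - h1 - h2))) *
        ∏ p ∈ Finset.range M, (x M - (x p + h2))) /
      ((∏ p ∈ (Finset.range (M + 1)).erase M, (x M - x p)) *
        ∏ p ∈ Finset.range M, (x M - (x p - h1))) =
    (h1 + h2) * ∏ p ∈ Finset.range M, rowFactor h1 h2 (x M - x p) := by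
  simp only [rowFactor, Finset.prod_div_distrib, Finset.prod_mul_distrib]
  rw [Finset.prod_range_succ, Finset.range_add_one, Finset.erase_insert (by simp), mul_div_assoc']
  simp only [← sub_add, sub_add_eq_sub_sub, sub_self, zero_add]
  congr 1 <;> ring

variable {h1 h2}

theorem sum_residues_psi (M : ℕ) {x : ℕ → K} (hx : Function.Injective x)
    (hx' : ∀ p q, x p ≠ x q - h1) :
    h2 * (h1 + h2) / h1 * ∑ i ∈ Finset.range M,
        (psiErase h1 h2 M x i (x i - h1) - psiErase h1 h2 M x i (x i)) +
      (h1 + h2) * ∏ p ∈ Finset.range M, rowFactor h1 h2 (x M - x p) = h1 + h2 := by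
  let s : Finset (ℕ ⊕ ℕ) := (Finset.range (M + 1)).disjSum (Finset.range M)
  let v : ℕ ⊕ ℕ → K := Sum.elim x fun p => x p - h1
  let w : ℕ ⊕ ℕ → K := Sum.elim (fun p => x p - h1 - h2) fun p => x p + h2
  have hv : Function.Injective v :=
    hx.sumElim (fun p q h => hx (sub_left_injective h)) hx'
  have herase_inl : ∀ i, s.erase (Sum.inl i) =
      ((Finset.range (M + 1)).erase i).disjSum (Finset.range M) := fun i => by
    ext (p | p) <;> simp [s]
  have herase_inr : ∀ i, s.erase (Sum.inr i) =
      (Finset.range (M + 1)).disjSum ((Finset.range M).erase i) := fun i => by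
    ext (p | p) <;> simp [s]
  have hcoeff : ∑ p ∈ Finset.range (M + 1), (x p - (x p - h1 - h2)) +
      ∑ p ∈ Finset.range M, (x p - h1 - (x p + h2)) = h1 + h2 := by
    rw [Finset.sum_range_succ, add_right_comm, ← Finset.sum_add_distrib,
      Finset.sum_eq_zero fun p _ => by ring]
    ring
  have hsum := sum_prod_sub_div_prod_erase_sub w (hv.injOn (s := s))
  simp only [s, Finset.sum_disjSum, herase_inl, herase_inr, Finset.prod_disjSum, v, w,
    Sum.elim_inl, Sum.elim_inr, hcoeff] at hsum
  rw [Finset.sum_range_succ, psi_last_residue_eq,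
    Finset.sum_congr rfl fun i hi => psi_residue_eq h1 h2 x (Finset.mem_range.1 hi),
    Finset.sum_congr rfl fun i hi => psi_residue_sub_eq h1 h2 x (Finset.mem_range.1 hi),
    ← Finset.mul_sum, ← Finset.mul_sum] at hsum
  rw [Finset.sum_sub_distrib]
  linear_combination hsum

theorem sum_psiErase_sub {M p : ℕ} {x : ℕ → K} (hx : Function.Injective x)
    (hx' : ∀ p q, x p ≠ x q - h1) (hp : p < M) (hM : x M = x p + h2) :
    ∑ i ∈ Finset.range M, (psiErase h1 h2 M x i (x i - h1) - psiErase h1 h2 M x i (x i)) =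
      h1 / h2 := by
  have hh1 : h1 ≠ 0 := fun h => hx' 0 0 (by simp [h])
  have h12 : h1 + h2 ≠ 0 := fun h => hx' M p (by linear_combination hM + h)
  have hh2 : h2 ≠ 0 := fun h => hp.ne' (hx (by simp [hM, h]))
  have hlast : ∏ q ∈ Finset.range M, rowFactor h1 h2 (x M - x q) = 0 :=
    Finset.prod_eq_zero (Finset.mem_range.2 hp) (by rw [hM, add_sub_cancel_left, rowFactor_self])
  have hsum := sum_residues_psi (h2 := h2) M hx hx'
  rw [hlast, mul_zero, add_zero] at hsum
  field_simp at hsum ⊢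
  exact hsum

/-- The coefficient of `λ + 1_i` in `e_0 λ`, in terms of the positions `x` of the first free boxes
of the rows of `λ`. -/
def raiseCoeff (h1 h2 : K) (x : ℕ → K) (i : ℕ) : K :=
  1 / h1 * ∏ p ∈ Finset.range i, rowFactor h1 h2 (x i - x p)

/-- The coefficient of `λ - 1_i` in `f_0 λ`, in terms of the positions `x` of the first free boxes
of the rows of `λ`, when the rows from `M` on are empty. -/
def lowerCoeff (h1 h2 : K) (M : ℕ) (x : ℕ → K) (i : ℕ) : K :=
  -(1 / h1) * ((∏ p ∈ Finset.Ioo i M, rowFactor h1 h2 (x i - h1 - x p)) *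
    tailFactor h1 h2 (x i - h1 - x M))

theorem lowerCoeff_eq_prod_stepFactor {M : ℕ} (x : ℕ → K) {i : ℕ} (hi : i < M) :
    lowerCoeff h1 h2 M x i = -(1 / h1) * (tailFactor h1 h2 (x i - h1 - x (i + 1)) *
      ∏ p ∈ Finset.Ico (i + 1) M, stepFactor h1 h2 (x i - h1 - x p) (x i - h1 - x (p + 1))) := by
  rw [tailFactor_mul_prod_stepFactor h1 h2 (fun p => x i - h1 - x p) (m := i + 1) hi,
    lowerCoeff, Finset.Ico_add_one_left_eq_Ioo]

theorem raiseCoeff_congr {x y : ℕ → K} {i : ℕ} (h : ∀ p ≤ i, x p = y p) :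
    raiseCoeff h1 h2 x i = raiseCoeff h1 h2 y i := by
  rw [raiseCoeff, raiseCoeff, h i le_rfl,
    Finset.prod_congr rfl fun p hp => by rw [h p (Finset.mem_range.1 hp).le]]

theorem lowerCoeff_congr {M : ℕ} {x y : ℕ → K} {i : ℕ} (hi : i ≤ M) (h : ∀ p, i ≤ p → x p = y p) :
    lowerCoeff h1 h2 M x i = lowerCoeff h1 h2 M y i := by
  rw [lowerCoeff, lowerCoeff, h i le_rfl, h M hi,
    Finset.prod_congr rfl fun p hp => by rw [h p (Finset.mem_Ioo.1 hp).1.le]]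

theorem raiseCoeff_sub_single {i k : ℕ} (x : ℕ → K) (hik : i < k) (c : K) :
    raiseCoeff h1 h2 (x - Pi.single i c : ℕ → K) k =
      1 / h1 * (rowFactor h1 h2 (x k - x i + c) *
        ∏ p ∈ (Finset.range k).erase i, rowFactor h1 h2 (x k - x p)) := by
  rw [raiseCoeff, ← Finset.mul_prod_erase _ _ (Finset.mem_range.2 hik),
    Finset.prod_congr rfl fun p hp => by
      rw [Pi.sub_apply _ _ p, Pi.single_eq_of_ne (Finset.ne_of_mem_erase hp), sub_zero]]
  simp only [Pi.sub_apply, Pi.single_eq_same, Pi.single_eq_of_ne hik.ne', sub_zero,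
    sub_sub_eq_add_sub, add_sub_right_comm]

theorem lowerCoeff_add_single {M i k : ℕ} (x : ℕ → K) (hik : i < k) (hk : k < M) (c : K) :
    lowerCoeff h1 h2 M (x + Pi.single k c : ℕ → K) i =
      -(1 / h1) * ((rowFactor h1 h2 (x k - x i + c) *
        ∏ p ∈ (Finset.Ioo i M).erase k, rowFactor h1 h2 (x i - h1 - x p)) *
          tailFactor h1 h2 (x i - h1 - x M)) := by
  rw [lowerCoeff, ← Finset.mul_prod_erase _ _ (Finset.mem_Ioo.2 ⟨hik, hk⟩),
    Finset.prod_congr rfl fun p hp => by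
      rw [Pi.add_apply _ _ p, Pi.single_eq_of_ne (Finset.ne_of_mem_erase hp), add_zero],
    ← rowFactor_neg_sub h1 h2 (x k - x i + c)]
  simp only [Pi.add_apply, Pi.single_eq_same, Pi.single_eq_of_ne hik.ne, Pi.single_eq_of_ne hk.ne',
    add_zero]
  ring_nf

theorem lowerCoeff_mul_raiseCoeff_comm {M : ℕ} (x : ℕ → K) {i k : ℕ} (hik : i ≠ k) (hi : i < M)
    (hk : k < M) :
    lowerCoeff h1 h2 M x i * raiseCoeff h1 h2 (x - Pi.single i h1 : ℕ → K) k =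
      raiseCoeff h1 h2 x k * lowerCoeff h1 h2 M (x + Pi.single k h1 : ℕ → K) i := by
  rcases hik.lt_or_gt with h | h
  · have hlower := lowerCoeff_add_single (h1 := h1) (h2 := h2) x h hk 0
    have hraise := raiseCoeff_sub_single (h1 := h1) (h2 := h2) x h 0
    simp only [Pi.single_zero, add_zero, sub_zero] at hlower hraise
    rw [hlower, hraise, lowerCoeff_add_single x h hk, raiseCoeff_sub_single x h]
    ring
  · have hraise : raiseCoeff h1 h2 (x - Pi.single i h1 : ℕ → K) k = raiseCoeff h1 h2 x k :=
      raiseCoeff_congr fun p hp => by simp [(hp.trans_lt h).ne]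
    have hlower : lowerCoeff h1 h2 M (x + Pi.single k h1 : ℕ → K) i = lowerCoeff h1 h2 M x i :=
      lowerCoeff_congr hi.le fun p hp => by simp [(h.trans_le hp).ne']
    rw [hraise, hlower, mul_comm]

theorem lowerCoeff_mul_raiseCoeff_self {M : ℕ} (x : ℕ → K) {i : ℕ} (hi : i < M) :
    lowerCoeff h1 h2 M x i * raiseCoeff h1 h2 (x - Pi.single i h1 : ℕ → K) i =
      -(1 / h1 ^ 2) * psiErase h1 h2 M x i (x i - h1) := by
  let y : ℕ → K := x - Pi.single i h1
  have hrow : ∀ p ∈ Finset.range i, y i - y p = x i - h1 - x p := fun p hp => by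
    simp [y, (Finset.mem_range.1 hp).ne]
  rw [raiseCoeff, Finset.prod_congr rfl fun p hp => congrArg _ (hrow p hp), lowerCoeff, psiErase,
    ← prod_range_mul_prod_Ioo _ hi]
  ring

theorem raiseCoeff_mul_lowerCoeff_self {M : ℕ} (x : ℕ → K) {i : ℕ} (hi : i < M) :
    raiseCoeff h1 h2 x i * lowerCoeff h1 h2 M (x + Pi.single i h1 : ℕ → K) i =
      -(1 / h1 ^ 2) * psiErase h1 h2 M x i (x i) := by
  let y : ℕ → K := x + Pi.single i h1
  have hrow : ∀ p, i < p → y i - h1 - y p = x i - x p := fun p hp => by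
    simp [y, hp.ne']
  rw [lowerCoeff, Finset.prod_congr rfl fun p hp => congrArg _ (hrow p (Finset.mem_Ioo.1 hp).1),
    hrow M hi, raiseCoeff, psiErase, ← prod_range_mul_prod_Ioo _ hi]
  ring

theorem sum_lowerCoeff_mul_raiseCoeff_sub {M p : ℕ} {x : ℕ → K} (hx : Function.Injective x)
    (hx' : ∀ p q, x p ≠ x q - h1) (hp : p < M) (hM : x M = x p + h2) :
    ∑ i ∈ Finset.range M,
      (lowerCoeff h1 h2 M x i * raiseCoeff h1 h2 (x - Pi.single i h1 : ℕ → K) i -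
        raiseCoeff h1 h2 x i * lowerCoeff h1 h2 M (x + Pi.single i h1 : ℕ → K) i) =
      -(1 / (h1 * h2)) := by
  have hh1 : h1 ≠ 0 := fun h => hx' 0 0 (by simp [h])
  rw [Finset.sum_congr rfl fun i hi => by
      rw [lowerCoeff_mul_raiseCoeff_self x (Finset.mem_range.1 hi),
        raiseCoeff_mul_lowerCoeff_self x (Finset.mem_range.1 hi), ← mul_sub],
    ← Finset.mul_sum, sum_psiErase_sub hx hx' hp hM]
  field_simp

variable (h1 h2)

/-- The analogue of `e_0`, for the rows `i < M`, on the free vector space on all sequences of row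
positions. No case distinction on `λ + 1_i` is needed, since the coefficient vanishes when this is
not a partition. -/
def raiseOp (M : ℕ) : Module.End K ((ℕ → K) →₀ K) :=
  Finsupp.lsum K fun x => LinearMap.toSpanSingleton K _
    (∑ i ∈ Finset.range M, Finsupp.single (x + Pi.single i h1) (raiseCoeff h1 h2 x i))

/-- The analogue of `f_0` on the free vector space on all sequences of row positions. It represents
`f_0` on the partitions whose rows from `M` on are empty; no case distinction on `λ - 1_i` is
needed, since the coefficient vanishes when this is not a partition. -/
def lowerOp (M : ℕ) : Module.End K ((ℕ → K) →₀ K) :=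
  Finsupp.lsum K fun x => LinearMap.toSpanSingleton K _
    (∑ i ∈ Finset.range M, Finsupp.single (x - Pi.single i h1) (lowerCoeff h1 h2 M x i))

theorem raiseOp_single (M : ℕ) (x : ℕ → K) (c : K) :
    raiseOp h1 h2 M (Finsupp.single x c) = ∑ i ∈ Finset.range M,
      Finsupp.single (x + Pi.single i h1) (c * raiseCoeff h1 h2 x i) := by
  simp [raiseOp, Finset.smul_sum]

theorem lowerOp_single (M : ℕ) (x : ℕ → K) (c : K) :
    lowerOp h1 h2 M (Finsupp.single x c) = ∑ i ∈ Finset.range M,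
      Finsupp.single (x - Pi.single i h1) (c * lowerCoeff h1 h2 M x i) := by
  simp [lowerOp, Finset.smul_sum]

variable {h1 h2}

theorem raiseOp_lowerOp_sub_single {M p : ℕ} {x : ℕ → K} (hx : Function.Injective x)
    (hx' : ∀ p q, x p ≠ x q - h1) (hp : p < M) (hM : x M = x p + h2) :
    raiseOp h1 h2 M (lowerOp h1 h2 M (Finsupp.single x 1)) -
        lowerOp h1 h2 M (raiseOp h1 h2 M (Finsupp.single x 1)) =
      Finsupp.single x (-(1 / (h1 * h2))) := by
  have hterm : ∀ i ∈ Finset.range M, ∀ k ∈ Finset.range M,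
      (Finsupp.single (x - Pi.single i h1 + Pi.single k h1)
          (lowerCoeff h1 h2 M x i * raiseCoeff h1 h2 (x - Pi.single i h1 : ℕ → K) k) -
        Finsupp.single (x + Pi.single k h1 - Pi.single i h1)
          (raiseCoeff h1 h2 x k * lowerCoeff h1 h2 M (x + Pi.single k h1 : ℕ → K) i) :
        (ℕ → K) →₀ K) =
      if i = k then Finsupp.single x
        (lowerCoeff h1 h2 M x i * raiseCoeff h1 h2 (x - Pi.single i h1 : ℕ → K) i -
          raiseCoeff h1 h2 x i * lowerCoeff h1 h2 M (x + Pi.single i h1 : ℕ → K) i) else 0 := by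
    intro i hi k hk
    split_ifs with hik
    · rw [← hik, sub_add_cancel, add_sub_cancel_right, ← Finsupp.single_sub]
    · rw [lowerCoeff_mul_raiseCoeff_comm x hik (Finset.mem_range.1 hi) (Finset.mem_range.1 hk),
        add_sub_right_comm, sub_self]
  simp only [raiseOp_single, lowerOp_single, map_sum, one_mul]
  rw [Finset.sum_comm (s := Finset.range M) (f := fun k i => Finsupp.single (x + _ - _) _),
    ← Finset.sum_sub_distrib]
  simp_rw [← Finset.sum_sub_distrib]
  rw [Finset.sum_congr rfl fun i hi => (Finset.sum_congr rfl (hterm i hi)).trans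
    (Finset.sum_ite_eq_of_mem _ _ _ hi), ← Finsupp.single_finsetSum,
    sum_lowerCoeff_mul_raiseCoeff_sub hx hx' hp hM]

end Positions

section Partitions

theorem eq_zero_of_plen_le {lam : Ptn} {p : ℕ} (h : plen lam ≤ p) : lam.1 p = 0 :=
  Nat.le_zero.1 ((lam.2.1 h).trans (Nat.find_spec lam.2.2).le)

theorem plen_le_of_eq_zero {lam : Ptn} {p : ℕ} (h : lam.1 p = 0) : plen lam ≤ p :=
  Nat.find_min' lam.2.2 h

theorem Addable.le_plen {lam : Ptn} {i : ℕ} (h : Addable lam i) : i ≤ plen lam := by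
  by_contra! hi
  exact Nat.not_lt_zero _ ((h _ hi).trans_eq (eq_zero_of_plen_le le_rfl))

theorem Removable.lt_plen {lam : Ptn} {i : ℕ} (h : Removable lam i) : i < plen lam := by
  by_contra! hi
  exact Nat.not_lt_zero _ (h.trans_eq (eq_zero_of_plen_le hi))

theorem plen_addBox_le {lam : Ptn} {i : ℕ} (h : Addable lam i) :
    plen (addBox lam i h) ≤ plen lam + 1 :=
  plen_le_of_eq_zero <| (Function.update_of_ne (Nat.lt_succ_of_le h.le_plen).ne' _ _).trans
    (eq_zero_of_plen_le (Nat.le_succ _))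

theorem plen_remBox_le {lam : Ptn} {i : ℕ} (h : Removable lam i) :
    plen (remBox lam i h) ≤ plen lam :=
  plen_le_of_eq_zero <| (Function.update_of_ne h.lt_plen.ne' _ _).trans (eq_zero_of_plen_le le_rfl)

variable (h1 h2 u : ℂ)

/-- The position of the first free box of row `p`, where the box in row `p` and column `c` has
position `c * h1 + p * h2`, both counted from `0`. -/
def rowPos (lam : Ptn) (p : ℕ) : ℂ := lam.1 p * h1 + p * h2

theorem rowPos_addBox {lam : Ptn} {i : ℕ} (h : Addable lam i) :
    rowPos h1 h2 (addBox lam i h) = rowPos h1 h2 lam + Pi.single i h1 := by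
  funext p
  rcases eq_or_ne p i with rfl | hp
  · simp [rowPos, addBox]
    ring
  · simp [rowPos, addBox, hp]

theorem rowPos_remBox {lam : Ptn} {i : ℕ} (h : Removable lam i) :
    rowPos h1 h2 (remBox lam i h) = rowPos h1 h2 lam - Pi.single i h1 := by
  have hpos : 1 ≤ lam.1 i := Nat.one_le_of_lt h
  funext p
  rcases eq_or_ne p i with rfl | hp
  · simp [rowPos, remBox, Nat.cast_sub hpos]
    ring
  · simp [rowPos, remBox, hp]

theorem rowPos_succ_of_eq {lam : Ptn} {p : ℕ} (h : lam.1 (p + 1) = lam.1 p) :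
    rowPos h1 h2 lam (p + 1) = rowPos h1 h2 lam p + h2 := by
  simp only [rowPos, h]
  push_cast
  ring

theorem rowPos_succ_of_plen_le {lam : Ptn} {p : ℕ} (h : plen lam ≤ p) :
    rowPos h1 h2 lam (p + 1) = rowPos h1 h2 lam p + h2 :=
  rowPos_succ_of_eq h1 h2 <| by rw [eq_zero_of_plen_le h, eq_zero_of_plen_le (h.trans p.le_succ)]

variable {h1 h2}

theorem rowPos_left_injective (hh1 : h1 ≠ 0) : Function.Injective (rowPos h1 h2) :=
  fun lam mu h => Subtype.ext <| funext fun p => by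
    simpa [rowPos, hh1] using congrFun h p

theorem rowPos_injective
    (hgen : ∀ a b : ℤ, ¬(a = 0 ∧ b = 0) → (a : ℂ) * h1 + (b : ℂ) * h2 ≠ 0) (lam : Ptn) :
    Function.Injective (rowPos h1 h2 lam) := fun p q h => by
  by_contra hpq
  refine hgen (lam.1 p - lam.1 q) (p - q) (by omega) ?_
  push_cast
  unfold rowPos at h
  linear_combination h

theorem rowPos_ne_rowPos_sub
    (hgen : ∀ a b : ℤ, ¬(a = 0 ∧ b = 0) → (a : ℂ) * h1 + (b : ℂ) * h2 ≠ 0) (lam : Ptn) (p q : ℕ) :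
    rowPos h1 h2 lam p ≠ rowPos h1 h2 lam q - h1 := fun h => by
  refine hgen (lam.1 p - lam.1 q + 1) (p - q) ?_ ?_
  · rintro ⟨hrow, hpq⟩
    obtain rfl : p = q := by omega
    omega
  · push_cast
    unfold rowPos at h
    linear_combination h

variable (h1 h2)

theorem ecoef_zero_eq_raiseCoeff (lam : Ptn) (i : ℕ) :
    ecoef h1 h2 u 0 lam i = raiseCoeff h1 h2 (rowPos h1 h2 lam) i := by
  rw [ecoef, raiseCoeff, pow_zero, mul_one]
  congr 1
  refine Finset.prod_congr rfl fun p _ => ?_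
  simp only [rowFactor, rowPos]
  congr 1 <;> ring

theorem raiseCoeff_eq_zero {lam : Ptn} {i : ℕ} (h : ¬Addable lam i) :
    raiseCoeff h1 h2 (rowPos h1 h2 lam) i = 0 := by
  obtain ⟨p, hp, hle⟩ : ∃ p < i, lam.1 p ≤ lam.1 i := by simpa [Addable] using h
  obtain ⟨k, rfl⟩ : ∃ k, i = k + 1 := ⟨i - 1, by omega⟩
  have hrow : lam.1 (k + 1) = lam.1 k :=
    (lam.2.1 k.le_succ).antisymm ((lam.2.1 (Nat.lt_succ_iff.1 hp)).trans hle)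
  rw [raiseCoeff, Finset.prod_eq_zero (Finset.self_mem_range_succ k), mul_zero]
  rw [rowPos_succ_of_eq h1 h2 hrow, add_sub_cancel_left, rowFactor_self]

theorem lowerCoeff_eq_zero {lam : Ptn} {i M : ℕ} (hi : i < M) (h : ¬Removable lam i) :
    lowerCoeff h1 h2 M (rowPos h1 h2 lam) i = 0 := by
  have hrow : lam.1 (i + 1) = lam.1 i := (lam.2.1 i.le_succ).antisymm (not_lt.1 h)
  rw [lowerCoeff_eq_prod_stepFactor _ hi, rowPos_succ_of_eq h1 h2 hrow, sub_right_comm,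
    sub_add_cancel_left, tailFactor_neg_sub, zero_mul, mul_zero]

variable {h1 h2}

theorem fcoef_zero_eq_lowerCoeff {lam : Ptn} (hx : Function.Injective (rowPos h1 h2 lam))
    (hx' : ∀ p q, rowPos h1 h2 lam p ≠ rowPos h1 h2 lam q - h1) {i M : ℕ}
    (hi : i < plen lam) (hM : plen lam < M) :
    fcoef h1 h2 u 0 lam i = lowerCoeff h1 h2 M (rowPos h1 h2 lam) i := by
  let x := rowPos h1 h2 lam
  have hempty : ∀ p ∈ Finset.Ico (i + 1) M, p ∉ Finset.Icc (i + 1) (plen lam) →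
      stepFactor h1 h2 (x i - h1 - x p) (x i - h1 - x (p + 1)) = 1 := by
    intro p hp hp'
    have hplen : plen lam < p := by
      simp only [Finset.mem_Ico, Finset.mem_Icc] at hp hp'
      omega
    have hsucc : x i - h1 - x (p + 1) = x i - h1 - x p - h2 := by
      rw [show x (p + 1) = x p + h2 from rowPos_succ_of_plen_le h1 h2 hplen.le, sub_add_eq_sub_sub]
    rw [hsucc]
    refine stepFactor_sub_eq_one h1 h2 (fun h => (hi.trans hplen).ne (hx ?_)) (hsucc ▸ fun h => ?_)
    · linear_combination h
    · exact hx' (p + 1) i (by linear_combination -h)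
  have hsub : Finset.Icc (i + 1) (plen lam) ⊆ Finset.Ico (i + 1) M := fun p hp => by
    simp only [Finset.mem_Ico, Finset.mem_Icc] at hp ⊢
    omega
  rw [lowerCoeff_eq_prod_stepFactor _ (hi.trans hM), ← Finset.prod_subset hsub hempty, fcoef,
    pow_zero, mul_one, mul_assoc]
  congr 2
  · rw [tailFactor, ← neg_div_neg_eq]
    simp only [rowPos]
    push_cast
    congr 1 <;> ring
  · refine Finset.prod_congr rfl fun p _ => ?_
    simp only [stepFactor, x, rowPos]
    push_cast
    congr 1 <;> ring

end Partitions

section Embedding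

variable (h1 h2 u : ℂ)

/-- The linear map from the Fock space to the free vector space on all sequences of row positions,
on which `raiseOp` and `lowerOp` act. It is used to transfer identities back to the Fock space. -/
def posEmb : FockSp →ₗ[ℂ] ((ℕ → ℂ) →₀ ℂ) := Finsupp.lmapDomain ℂ ℂ (rowPos h1 h2)

theorem posEmb_single (lam : Ptn) (c : ℂ) :
    posEmb h1 h2 (Finsupp.single lam c) = Finsupp.single (rowPos h1 h2 lam) c := by
  simp [posEmb]

variable {h1 h2} in
theorem posEmb_injective (hh1 : h1 ≠ 0) : Function.Injective (posEmb h1 h2) :=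
  Finsupp.mapDomain_injective (rowPos_left_injective hh1)

theorem eOp_single (j : ℕ) (lam : Ptn) :
    eOp h1 h2 u j (Finsupp.single lam 1) = evec h1 h2 u j lam := by
  simp [eOp]

theorem fOp_single (j : ℕ) (lam : Ptn) :
    fOp h1 h2 u j (Finsupp.single lam 1) = fvec h1 h2 u j lam := by
  simp [fOp]

theorem posEmb_evec {lam : Ptn} {M : ℕ} (hM : plen lam < M) :
    posEmb h1 h2 (evec h1 h2 u 0 lam) =
      raiseOp h1 h2 M (Finsupp.single (rowPos h1 h2 lam) 1) := by
  have hrange : evec h1 h2 u 0 lam = ∑ i ∈ Finset.range M,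
      if h : Addable lam i then Finsupp.single (addBox lam i h) (ecoef h1 h2 u 0 lam i) else 0 :=
    Finset.sum_subset (Finset.range_subset_range.2 hM) fun i _ hi => dif_neg fun h =>
      hi (Finset.mem_range.2 (Nat.lt_succ_of_le h.le_plen))
  rw [hrange, map_sum, raiseOp_single]
  refine Finset.sum_congr rfl fun i _ => ?_
  split_ifs with h
  · rw [posEmb_single, rowPos_addBox, ecoef_zero_eq_raiseCoeff, one_mul]
  · rw [raiseCoeff_eq_zero h1 h2 h, mul_zero, map_zero, Finsupp.single_zero]

variable {h1 h2} in
theorem posEmb_fvec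
    (hgen : ∀ a b : ℤ, ¬(a = 0 ∧ b = 0) → (a : ℂ) * h1 + (b : ℂ) * h2 ≠ 0)
    {lam : Ptn} {M : ℕ} (hM : plen lam < M) :
    posEmb h1 h2 (fvec h1 h2 u 0 lam) =
      lowerOp h1 h2 M (Finsupp.single (rowPos h1 h2 lam) 1) := by
  have hrange : fvec h1 h2 u 0 lam = ∑ i ∈ Finset.range M,
      if h : Removable lam i then Finsupp.single (remBox lam i h) (fcoef h1 h2 u 0 lam i) else 0 :=
    Finset.sum_subset (Finset.range_subset_range.2 hM.le) fun i _ hi => dif_neg fun h =>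
      hi (Finset.mem_range.2 h.lt_plen)
  rw [hrange, map_sum, lowerOp_single]
  refine Finset.sum_congr rfl fun i hi => ?_
  split_ifs with h
  · rw [posEmb_single, rowPos_remBox, fcoef_zero_eq_lowerCoeff u (rowPos_injective hgen lam)
      (rowPos_ne_rowPos_sub hgen lam) h.lt_plen hM, one_mul]
  · rw [lowerCoeff_eq_zero h1 h2 (Finset.mem_range.1 hi) h, mul_zero, map_zero,
      Finsupp.single_zero]

/-- The span of the partitions with fewer than `M` nonzero parts. On it, `e_0` and `f_0` agree with
`raiseOp` and `lowerOp` for the same `M`. -/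
def plenLT (M : ℕ) : Submodule ℂ FockSp := Finsupp.supported ℂ ℂ {lam | plen lam < M}

theorem evec_mem_plenLT (j : ℕ) {lam : Ptn} {M : ℕ} (hM : plen lam + 1 < M) :
    evec h1 h2 u j lam ∈ plenLT M := by
  refine Submodule.sum_mem _ fun i _ => ?_
  split_ifs with h
  · exact Finsupp.single_mem_supported _ _ ((plen_addBox_le h).trans_lt hM)
  · exact Submodule.zero_mem _

theorem fvec_mem_plenLT (j : ℕ) {lam : Ptn} {M : ℕ} (hM : plen lam < M) :
    fvec h1 h2 u j lam ∈ plenLT M := by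
  refine Submodule.sum_mem _ fun i _ => ?_
  split_ifs with h
  · exact Finsupp.single_mem_supported _ _ ((plen_remBox_le h).trans_lt hM)
  · exact Submodule.zero_mem _

theorem eqOn_plenLT {V : Type*} [AddCommMonoid V] [Module ℂ V] {M : ℕ} {f g : FockSp →ₗ[ℂ] V}
    (h : ∀ lam, plen lam < M → f (Finsupp.single lam 1) = g (Finsupp.single lam 1)) :
    Set.EqOn f g (plenLT M) := by
  rw [plenLT, Finsupp.supported_eq_span_single]
  exact LinearMap.eqOn_span (Set.forall_mem_image.2 h)

theorem posEmb_eOp {M : ℕ} {v : FockSp} (hv : v ∈ plenLT M) :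
    posEmb h1 h2 (eOp h1 h2 u 0 v) = raiseOp h1 h2 M (posEmb h1 h2 v) :=
  eqOn_plenLT (f := posEmb h1 h2 ∘ₗ eOp h1 h2 u 0) (g := raiseOp h1 h2 M ∘ₗ posEmb h1 h2)
    (fun lam hM => by
      simp only [LinearMap.comp_apply, eOp_single, posEmb_single, posEmb_evec h1 h2 u hM]) hv

variable {h1 h2} in
theorem posEmb_fOp
    (hgen : ∀ a b : ℤ, ¬(a = 0 ∧ b = 0) → (a : ℂ) * h1 + (b : ℂ) * h2 ≠ 0)
    {M : ℕ} {v : FockSp} (hv : v ∈ plenLT M) :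
    posEmb h1 h2 (fOp h1 h2 u 0 v) = lowerOp h1 h2 M (posEmb h1 h2 v) :=
  eqOn_plenLT (f := posEmb h1 h2 ∘ₗ fOp h1 h2 u 0) (g := lowerOp h1 h2 M ∘ₗ posEmb h1 h2)
    (fun lam hM => by
      simp only [LinearMap.comp_apply, fOp_single, posEmb_single, posEmb_fvec u hgen hM]) hv

end Embedding

end Fock

theorem fock_e0_f0_commutator_general (h1 h2 u : ℂ)
    (hgen : ∀ a b : ℤ, ¬(a = 0 ∧ b = 0) → (a : ℂ) * h1 + (b : ℂ) * h2 ≠ 0) :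
    eOp h1 h2 u 0 * fOp h1 h2 u 0 - fOp h1 h2 u 0 * eOp h1 h2 u 0
      = (-(1 / (h1 * h2))) • (1 : Module.End ℂ FockSp) := by
  have hh1 : h1 ≠ 0 := by simpa using hgen 1 0 (by simp)
  refine Finsupp.lhom_ext' fun lam => LinearMap.ext_ring (posEmb_injective (h2 := h2) hh1 ?_)
  -- Adding a box may create row `plen lam`, which must still be below `M` for `f_0`.
  let M := plen lam + 2
  have hM : plen lam < M := by omega
  let b := Finsupp.single (rowPos h1 h2 lam) (1 : ℂ)
  calc posEmb h1 h2 ((eOp h1 h2 u 0 * fOp h1 h2 u 0 - fOp h1 h2 u 0 * eOp h1 h2 u 0)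
          (Finsupp.single lam 1))
      = raiseOp h1 h2 M (lowerOp h1 h2 M b) - lowerOp h1 h2 M (raiseOp h1 h2 M b) := by
        rw [LinearMap.sub_apply, Module.End.mul_apply, Module.End.mul_apply, map_sub, fOp_single,
          eOp_single, posEmb_eOp h1 h2 u (fvec_mem_plenLT h1 h2 u 0 hM), posEmb_fvec u hgen hM,
          posEmb_fOp u hgen (evec_mem_plenLT h1 h2 u 0 (Nat.lt_succ_self _)),
          posEmb_evec h1 h2 u hM]
    _ = Finsupp.single (rowPos h1 h2 lam) (-(1 / (h1 * h2))) :=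
        raiseOp_lowerOp_sub_single (rowPos_injective hgen lam) (rowPos_ne_rowPos_sub hgen lam)
          (Nat.lt_succ_self _) (rowPos_succ_of_plen_le h1 h2 (Nat.le_succ _))
    _ = posEmb h1 h2 ((-(1 / (h1 * h2)) • (1 : Module.End ℂ FockSp)) (Finsupp.single lam 1)) := by
        rw [LinearMap.smul_apply, Module.End.one_apply, map_smul, posEmb_single,
          Finsupp.smul_single, smul_eq_mul, mul_one]

/-- For the Fock module of the affine Yangian of `gl_1` (with `u = 0`
and generic `h1, h2`), the operator `[e_0, f_0]` equals `−1/(h1·h2)` times the identity. -/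
theorem fock_e0_f0_commutator (h1 h2 : ℂ)
    (hgen : ∀ a b : ℤ, ¬(a = 0 ∧ b = 0) → (a : ℂ) * h1 + (b : ℂ) * h2 ≠ 0) :
    eOp h1 h2 0 0 * fOp h1 h2 0 0 - fOp h1 h2 0 0 * eOp h1 h2 0 0
      = (-(1 / (h1 * h2))) • (1 : Module.End ℂ FockSp) :=
  fock_e0_f0_commutator_general h1 h2 0 hgen

end
end

section
/- Let L be a Lie algebra over ℂ, and let q ∈ ℂ be nonzero and not a root of unity (q^n ≠ 1 for every integer n ≥ 1). Suppose (e_i)_{i∈ℤ} is a family of elements of L satisfying, for all i, j ∈ ℤ, the relation [e_{i+3}, e_j] − (1+q+q⁻¹)[e_{i+2}, e_{j+1}] + (1+q+q⁻¹)[e_{i+1}, e_{j+2}] − [e_i, e_{j+3}] = 0. Then for all i, j ∈ ℤ with i + j ≠ 0 one has (q^{i+j} − 1)·[e_i, e_j] = (q^j − q^i)·[e_0, e_{i+j}], and for all i ∈ ℤ one has (q² − 1)·[e_i, e_{−i}] = (q^{i+1} − q^{1−i})·[e_1, e_{−1}]. -/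
/-!
For fixed `N` the brackets `a i = ⁅e i, e (N - i)⁆` satisfy a linear recurrence with characteristic
polynomial `(X - 1) (X - q) (X - q⁻¹)`, and skew-symmetry of the bracket reads `a (N - i) = -a i`.
The component of `a` belonging to the root `1` is a constant equal to its own negative, so it
vanishes. The reflection `i ↦ N - i` interchanges the components belonging to `q` and `q⁻¹`, which
leaves a single free vector: `a i` is proportional to `q ^ i - q ^ (N - i)`. To include the case
`q = q⁻¹`, the proportionality is proved in cross-multiplied form, without dividing by `q - q⁻¹`.
-/

theorem apply_add_eq_zpow_smul_of_apply_succ {G α : Type*} [Group G] [MulAction G α]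
    {g : G} {d : ℤ → α} (h : ∀ i, d (i + 1) = g • d i) (k n : ℤ) : d (k + n) = g ^ n • d k := by
  induction n using Int.induction_on with
  | zero => simp
  | succ n ih => rw [← add_assoc, h, ih, smul_smul, mul_self_zpow]
  | pred n ih =>
    rw [sub_eq_neg_add, zpow_add, zpow_neg_one, mul_smul, eq_inv_smul_iff, ← ih, ← h]
    congr 1
    ring

section AntisymmetricRecurrence

variable {R V : Type*} [CommRing R] [AddCommGroup V] [Module R V] {N : ℤ} {a : ℤ → V}

theorem second_order_recurrence_of_third_order_of_antisymm (h2 : IsSMulRegular V (2 : R)) {t : R}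
    (hrec : ∀ i, a (i + 3) - (1 + t) • a (i + 2) + (1 + t) • a (i + 1) - a i = 0)
    (hanti : ∀ i, a (N - i) = -a i) (i : ℤ) :
    a (i + 2) - t • a (i + 1) + a i = 0 := by
  let c : ℤ → V := fun i => a (i + 2) - t • a (i + 1) + a i
  have hstep : ∀ i, c (i + 1) = (1 : Rˣ) • c i := fun i => by
    simp only [c, one_smul, show i + 1 + 2 = i + 3 by ring, show i + 1 + 1 = i + 2 by ring]
    linear_combination (norm := module) hrec i
  have hconst : c (N - (i + 2)) = c i := by
    simpa using apply_add_eq_zpow_smul_of_apply_succ hstep i (N - (i + 2) - i)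
  have hneg : c (N - (i + 2)) = -c i := by
    simp only [c, show N - (i + 2) + 2 = N - i by ring,
      show N - (i + 2) + 1 = N - (i + 1) by ring, hanti]
    module
  refine h2.right_eq_zero_of_smul ?_
  linear_combination (norm := module) hneg - hconst

variable {q : Rˣ}

theorem apply_succ_sub_inv_smul_eq_zpow_smul
    (hrec : ∀ i, a (i + 2) - ((q : R) + ↑q⁻¹) • a (i + 1) + a i = 0) (i : ℤ) :
    a (i + 1) - q⁻¹ • a i = q ^ i • (a 1 - q⁻¹ • a 0) := by
  have hstep : ∀ i, a (i + 1 + 1) - q⁻¹ • a (i + 1) = q • (a (i + 1) - q⁻¹ • a i) := fun i => by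
    rw [smul_sub, smul_inv_smul, add_assoc, one_add_one_eq_two]
    simp only [Units.smul_def]
    linear_combination (norm := module) hrec i
  simpa using apply_add_eq_zpow_smul_of_apply_succ (d := fun i => a (i + 1) - q⁻¹ • a i) hstep 0 i

theorem apply_succ_sub_smul_eq_zpow_smul_of_antisymm
    (hrec : ∀ i, a (i + 2) - ((q : R) + ↑q⁻¹) • a (i + 1) + a i = 0)
    (hanti : ∀ i, a (N - i) = -a i) (i : ℤ) :
    a (i + 1) - q • a i = q ^ (N - i) • (a 1 - q⁻¹ • a 0) := by
  have h := apply_succ_sub_inv_smul_eq_zpow_smul hrec (N - (i + 1))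
  rw [show N - (i + 1) + 1 = N - i by ring, hanti, hanti] at h
  calc a (i + 1) - q • a i = q • (-a i - q⁻¹ • -a (i + 1)) := by
        rw [smul_sub, smul_inv_smul, smul_neg]; abel
    _ = q ^ (N - i) • (a 1 - q⁻¹ • a 0) := by
        rw [h, smul_smul, mul_self_zpow]; ring_nf

theorem zpow_sub_zpow_smul_comm_of_antisymm
    (hrec : ∀ i, a (i + 2) - ((q : R) + ↑q⁻¹) • a (i + 1) + a i = 0)
    (hanti : ∀ i, a (N - i) = -a i) (i k : ℤ) :
    (↑(q ^ k) - ↑(q ^ (N - k)) : R) • a i = (↑(q ^ i) - ↑(q ^ (N - i)) : R) • a k := by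
  let b : ℤ → V := fun i =>
    (↑(q ^ k) - ↑(q ^ (N - k)) : R) • a i - (↑(q ^ i) - ↑(q ^ (N - i)) : R) • a k
  have hk : ((q : R) - ↑q⁻¹) • a k =
      (↑(q ^ k) - ↑(q ^ (N - k)) : R) • (a 1 - q⁻¹ • a 0) := by
    have hinv := apply_succ_sub_inv_smul_eq_zpow_smul hrec k
    have hmul := apply_succ_sub_smul_eq_zpow_smul_of_antisymm hrec hanti k
    simp only [Units.smul_def] at hinv hmul ⊢
    linear_combination (norm := module) hinv - hmul
  have hstep : ∀ i, b (i + 1) = q • b i := fun i => by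
    have hmul := apply_succ_sub_smul_eq_zpow_smul_of_antisymm hrec hanti i
    simp only [b, ← sub_sub, zpow_add_one, zpow_sub_one, Units.val_mul]
    simp only [Units.smul_def] at hmul hk ⊢
    linear_combination (norm := module)
      (↑(q ^ k) - ↑(q ^ (N - k)) : R) • hmul - (↑(q ^ (N - i)) : R) • hk
  have hb : b i = q ^ (i - k) • b k := by
    simpa using apply_add_eq_zpow_smul_of_apply_succ hstep k (i - k)
  rw [← sub_eq_zero]
  simpa [b] using hb

end AntisymmetricRecurrence

section QuadraticRelation

variable {R L : Type*} [CommRing R] [LieRing L] [LieAlgebra R L]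

theorem zpow_sub_zpow_smul_lie_comm (h2 : IsSMulRegular L (2 : R)) (q : Rˣ) (e : ℤ → L)
    (hrel : ∀ i j : ℤ,
      ⁅e (i + 3), e j⁆ - (1 + q + ↑q⁻¹ : R) • ⁅e (i + 2), e (j + 1)⁆
        + (1 + q + ↑q⁻¹ : R) • ⁅e (i + 1), e (j + 2)⁆ - ⁅e i, e (j + 3)⁆ = 0)
    {i j k l : ℤ} (hsum : i + j = k + l) :
    (↑(q ^ k) - ↑(q ^ l) : R) • ⁅e i, e j⁆ = (↑(q ^ i) - ↑(q ^ j) : R) • ⁅e k, e l⁆ := by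
  let a : ℤ → L := fun m => ⁅e m, e (i + j - m)⁆
  have hanti : ∀ m, a (i + j - m) = -a m := fun m => by
    simp only [a, sub_sub_cancel, lie_skew]
  have hrec : ∀ m, a (m + 3) - (1 + (q + ↑q⁻¹) : R) • a (m + 2)
      + (1 + (q + ↑q⁻¹) : R) • a (m + 1) - a m = 0 := fun m => by
    have h := hrel m (i + j - (m + 3))
    rwa [show i + j - (m + 3) + 1 = i + j - (m + 2) by ring,
      show i + j - (m + 3) + 2 = i + j - (m + 1) by ring,
      show i + j - (m + 3) + 3 = i + j - m by ring, add_assoc (1 : R)] at h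
  have h := zpow_sub_zpow_smul_comm_of_antisymm
    (second_order_recurrence_of_third_order_of_antisymm h2 hrec hanti) hanti i k
  simpa only [a, add_sub_cancel_left, sub_eq_of_eq_add' hsum] using h

theorem degree_two_brackets_determined_general (h2 : IsSMulRegular L (2 : R)) (q : Rˣ) (e : ℤ → L)
    (hrel : ∀ i j : ℤ,
      ⁅e (i + 3), e j⁆ - (1 + q + ↑q⁻¹ : R) • ⁅e (i + 2), e (j + 1)⁆
        + (1 + q + ↑q⁻¹ : R) • ⁅e (i + 1), e (j + 2)⁆ - ⁅e i, e (j + 3)⁆ = 0) :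
    (∀ i j : ℤ,
        (↑(q ^ (i + j)) - 1 : R) • ⁅e i, e j⁆ = (↑(q ^ j) - ↑(q ^ i) : R) • ⁅e 0, e (i + j)⁆) ∧
    (∀ i : ℤ,
        ((q : R) ^ 2 - 1) • ⁅e i, e (-i)⁆ =
          (↑(q ^ (i + 1)) - ↑(q ^ (1 - i)) : R) • ⁅e 1, e (-1)⁆) := by
  constructor
  · intro i j
    have h := zpow_sub_zpow_smul_lie_comm h2 q e hrel (zero_add (i + j)).symm
    rw [zpow_zero, Units.val_one] at h
    linear_combination (norm := module) -h
  · intro i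
    have h := zpow_sub_zpow_smul_lie_comm h2 q e hrel
      ((add_neg_cancel i).trans (add_neg_cancel 1).symm)
    rw [zpow_one, zpow_neg_one] at h
    rw [sub_eq_add_neg 1 i, zpow_add_one, zpow_one_add, Units.val_mul, Units.val_mul]
    linear_combination (norm := module) (q : R) • h + q.mul_inv • ⁅e i, e (-i)⁆

end QuadraticRelation

/-- Let `L` be a Lie algebra over `ℂ` and `q ∈ ℂ` nonzero, not a root of
unity.  If a family `(e_i)_{i∈ℤ}` in `L` satisfies the quadratic relation (u1), then all
degree-2 brackets are determined by `[e_0,e_{i+j}]` (when `i+j ≠ 0`) resp. `[e_1,e_{−1}]`. -/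
theorem degree_two_brackets_determined {L : Type*} [LieRing L] [LieAlgebra ℂ L]
    (q : ℂ) (hq : q ≠ 0) (hroot : ∀ n : ℕ, 1 ≤ n → q ^ n ≠ 1) (e : ℤ → L)
    (hrel : ∀ i j : ℤ,
      ⁅e (i + 3), e j⁆ - (1 + q + q⁻¹) • ⁅e (i + 2), e (j + 1)⁆
        + (1 + q + q⁻¹) • ⁅e (i + 1), e (j + 2)⁆ - ⁅e i, e (j + 3)⁆ = 0) :
    (∀ i j : ℤ, i + j ≠ 0 →
        (q ^ (i + j) - 1) • ⁅e i, e j⁆ = (q ^ j - q ^ i) • ⁅e 0, e (i + j)⁆) ∧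
    (∀ i : ℤ,
        (q ^ 2 - 1) • ⁅e i, e (-i)⁆ = (q ^ (i + 1) - q ^ (1 - i)) • ⁅e 1, e (-1)⁆) := by
  have h := degree_two_brackets_determined_general (smul_right_injective L (two_ne_zero (α := ℂ)))
    (Units.mk0 q hq) e hrel
  simp only [Units.val_zpow_eq_zpow_val, Units.val_mk0] at h
  exact ⟨fun i j _ => h.1 i j, h.2⟩
end
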